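/- Let n ≥ 3 and define B_k = Σ_{i=k}^{n} (−1)^{i−k} A_i ∈ R for 3 ≤ k ≤ n (so B_n = A_n and A_k = B_k + B_{k+1} for 3 ≤ k ≤ n−1). Then for every j with 3 ≤ j ≤ n, one has in ⋀^{n−2}_K Ω_{K/ℂ}: ι_{V₁}ι_{V₂}⋯ι_{V_{n−1}} ( (A₁A₃⋯A_{j−1}·B_j B_{j+1}⋯B_n)^{−1} Ω ) = (−1)^{n−j} dlog(A₁/B_j) ∧ dlog(A₃/B_j) ∧ dlog(A₄/B_j) ∧ ⋯ ∧ dlog(A_{j−1}/B_j) ∧ dlog(B_{j+1}/B_j) ∧ ⋯ ∧ dlog(B_n/B_j). (This is Proposition 3.5 of the paper; the case j = n is the Schubert divisor case and j = 3 is the Rietsch divisor case.) -/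

import Mathlib

/-!
Proposition 3.5 of the paper: for `B_k = ∑_{i=k}^n (−1)^{i−k} A_i` and every
`3 ≤ j ≤ n`,
`ι_{V₁}⋯ι_{V_{n−1}} ((A₁A₃⋯A_{j−1}B_j⋯B_n)⁻¹ Ω)
  = (−1)^{n−j} dlog(A₁/B_j) ∧ dlog(A₃/B_j) ∧ ⋯ ∧ dlog(A_{j−1}/B_j)
      ∧ dlog(B_{j+1}/B_j) ∧ ⋯ ∧ dlog(B_n/B_j)`
for the two-step flag variety `Fℓ_{1,n−1;n}`.
-/

set_option synthInstance.maxHeartbeats 1000000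
set_option maxHeartbeats 1000000

noncomputable section

open MvPolynomial

/-- Index type for the `2n−3` variables: `z_j` for `2 ≤ j ≤ n` and `ẑ_j` for
`2 ≤ j ≤ n−1`. -/
abbrev FlagIdx (n : ℕ) := {j : ℕ // 2 ≤ j ∧ j ≤ n} ⊕ {j : ℕ // 2 ≤ j ∧ j ≤ n - 1}

/-- The coordinate ring `R = ℂ[z₂,…,z_n, ẑ₂,…,ẑ_{n−1}]`. -/
abbrev FlagR (n : ℕ) := MvPolynomial (FlagIdx n) ℂ

/-- The fraction field `K = Frac(R)`. -/
abbrev FlagK (n : ℕ) := FractionRing (FlagR n)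

/-- The coordinate `z_j` (with the convention `z₁ = 1`). -/
def flagZ (n j : ℕ) : FlagR n :=
  if h : 2 ≤ j ∧ j ≤ n then X (Sum.inl ⟨j, h⟩) else 1

/-- The coordinate `ẑ_j` (with the convention `ẑ_n = 1`). -/
def flagZh (n j : ℕ) : FlagR n :=
  if h : 2 ≤ j ∧ j ≤ n - 1 then X (Sum.inr ⟨j, h⟩) else 1

/-- `A_j = z_j ẑ_j` for `j ≥ 2` (so `A_n = z_n`), and
`A₁ = A₂ + ∑_{j=3}^n (−1)^j A_j`. -/
def flagA (n j : ℕ) : FlagR n :=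
  if j = 1 then
    flagZ n 2 * flagZh n 2 + ∑ k ∈ Finset.Icc 3 n, (-1 : FlagR n) ^ k * (flagZ n k * flagZh n k)
  else flagZ n j * flagZh n j

/-- The ℂ-derivations `V_{i−1} = z_i ∂/∂z_i − ẑ_i ∂/∂ẑ_i` for `2 ≤ i ≤ n−1`, and
`V_{n−1} = z_n ∂/∂z_n + ∑_{j=2}^{n−1} ẑ_j ∂/∂ẑ_j`. -/
def flagV (n i : ℕ) : Derivation ℂ (FlagR n) (FlagR n) :=
  if i = n - 1 then
    MvPolynomial.mkDerivation ℂ (fun s => match s with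
      | Sum.inl ⟨j, _⟩ => if j = n then flagZ n j else 0
      | Sum.inr ⟨j, _⟩ => flagZh n j)
  else
    MvPolynomial.mkDerivation ℂ (fun s => match s with
      | Sum.inl ⟨j, _⟩ => if j = i + 1 then flagZ n j else 0
      | Sum.inr ⟨j, _⟩ => if j = i + 1 then -(flagZh n j) else 0)

/-- Contraction (interior product) of `⋀_A Ω_{A/ℂ}` by the `A`-linear functional
`Ω_{A/ℂ} → A` determined by `dg ↦ V g`, for a ℂ-derivation `V` of `A`. -/
def contrDer {A : Type} [CommRing A] [Algebra ℂ A] (V : Derivation ℂ A A) :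
    ExteriorAlgebra A (Ω[A⁄ℂ]) →ₗ[A] ExteriorAlgebra A (Ω[A⁄ℂ]) :=
  CliffordAlgebra.contractLeft ((KaehlerDifferential.linearMapEquivDerivation ℂ A).symm V)

/-- `dlog f = f⁻¹ df ∈ Ω_{K/ℂ}`. -/
def dlog (n : ℕ) (f : FlagK n) : Ω[FlagK n⁄ℂ] :=
  f⁻¹ • KaehlerDifferential.D ℂ (FlagK n) f

/-- The image of `A_j` in `K`. -/
def flagAK (n j : ℕ) : FlagK n := algebraMap (FlagR n) (FlagK n) (flagA n j)

/-- `Ω = dz₂∧dẑ₂∧⋯∧dz_{n−1}∧dẑ_{n−1}∧dz_n`, viewed in `⋀_K Ω_{K/ℂ}`. -/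
def flagOmegaK (n : ℕ) : ExteriorAlgebra (FlagK n) (Ω[FlagK n⁄ℂ]) :=
  (((List.Ico 2 n).map (fun j =>
      ExteriorAlgebra.ι (FlagK n)
        (KaehlerDifferential.D ℂ (FlagK n) (algebraMap (FlagR n) (FlagK n) (flagZ n j))) *
      ExteriorAlgebra.ι (FlagK n)
        (KaehlerDifferential.D ℂ (FlagK n) (algebraMap (FlagR n) (FlagK n) (flagZh n j))))).prod) *
    ExteriorAlgebra.ι (FlagK n)
      (KaehlerDifferential.D ℂ (FlagK n) (algebraMap (FlagR n) (FlagK n) (flagZ n n)))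

/-- `B_k = ∑_{i=k}^n (−1)^{i−k} A_i` (so `B_n = A_n` and `A_k = B_k + B_{k+1}`). -/
def flagB (n k : ℕ) : FlagR n :=
  ∑ i ∈ Finset.Icc k n, (-1 : FlagR n) ^ (i - k) * flagA n i

/-- The image of `B_k` in `K`. -/
def flagBK (n k : ℕ) : FlagK n := algebraMap (FlagR n) (FlagK n) (flagB n k)

/-!
Since `dA_k = z_k dẑ_k + ẑ_k dz_k`, one has `dz_k ∧ dẑ_k = dlog z_k ∧ dA_k`, so that `Ω` is the
product of the pairs `dlog z_k ∧ dA_k`, `2 ≤ k < n`, and of `dA_n`. For `i ≤ n - 2` the field `V_i`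
annihilates every `A_k` and is dual to `dlog z_{i+1}`; contracting with all these fields leaves
`dA₂ ∧ ⋯ ∧ dA_n`, and `V_{n-1}` has to be moved past `n - 2` contractions.

On the other side, `V_{n-1}` is an Euler field: all `A_k` and `B_k` have weight one. If `E` is
such a field, then `dlog (f₁/g) ∧ ⋯ ∧ dlog (f_r/g) = ι_E (dlog g ∧ dlog f₁ ∧ ⋯ ∧ dlog f_r)`,
because both sides agree after the shift `dlog f_i ↦ dlog f_i - dlog g`, which is invisible next to
`dlog g` and makes each factor vanish on `E`. As `A₁ = B₂` and `A_k = B_k + B_{k+1}`, replacing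
`dA_k` by `dB_k` is unitriangular, and the right-hand side also reduces to
`ι_{V_{n-1}} (dA₂ ∧ ⋯ ∧ dA_n)`.
-/

section ExteriorAlgebra

open ExteriorAlgebra
open CliffordAlgebra (contractLeft contractLeft_ι_mul contractLeft_one contractLeft_comm)

variable (R : Type*) {M σ : Type*} [CommRing R] [AddCommGroup M] [Module R M]

/-- The wedge product `x₁ ∧ ⋯ ∧ x_r` in `⋀_R M` of a list `[x₁, …, x_r]` of vectors. -/
def wedge (l : List M) : ExteriorAlgebra R M := (l.map (ι R)).prod

theorem wedge_nil : wedge R ([] : List M) = 1 := rfl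

theorem wedge_cons (x : M) (l : List M) :
    wedge R (x :: l) = ι R x * wedge R l := List.prod_cons

theorem wedge_append (l₁ l₂ : List M) : wedge R (l₁ ++ l₂) = wedge R l₁ * wedge R l₂ := by
  simp only [wedge, List.map_append, List.prod_append]

theorem wedge_map (f : σ → M) (l : List σ) :
    wedge R (l.map f) = (l.map fun i => ι R (f i)).prod := by
  rw [wedge, List.map_map]
  rfl

theorem ι_mul_wedge_cons_self (x : M) (l : List M) : ι R x * wedge R (x :: l) = 0 := by
  rw [wedge_cons, ← mul_assoc, ι_sq_zero, zero_mul]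

theorem wedge_cons_cons_swap (x y : M) (l : List M) :
    wedge R (x :: y :: l) = -wedge R (y :: x :: l) := by
  have anticomm : ι R x * ι R y = -(ι R y * ι R x) :=
    eq_neg_of_add_eq_zero_left (ι_add_mul_swap x y)
  simp only [wedge_cons, ← mul_assoc, anticomm, neg_mul]

theorem wedge_cons_append (x : M) (l₁ l₂ : List M) :
    wedge R (x :: (l₁ ++ l₂)) = (-1 : R) ^ l₁.length • wedge R (l₁ ++ x :: l₂) := by
  induction l₁ with
  | nil => simp
  | cons y l₁ ih =>
    rw [List.cons_append, wedge_cons_cons_swap, wedge_cons, ih, List.cons_append, wedge_cons,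
      List.length_cons, pow_succ, mul_smul_comm, mul_neg_one, neg_smul]

theorem wedge_map_smul (c : σ → R) (f : σ → M) (l : List σ) :
    wedge R (l.map fun i => c i • f i) = (l.map c).prod • wedge R (l.map f) := by
  induction l with
  | nil => simp
  | cons i l ih =>
    simp only [List.map_cons, wedge_cons, ih, map_smul, smul_mul_smul_comm, List.prod_cons]

theorem wedge_cons_map_sub (x : M) (l : List M) :
    wedge R (x :: l.map (· - x)) = wedge R (x :: l) := by
  induction l with
  | nil => rfl
  | cons y l ih =>
    rw [List.map_cons, wedge_cons_cons_swap, wedge_cons, ih, map_sub, sub_mul,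
      ι_mul_wedge_cons_self, sub_zero, ← wedge_cons, ← wedge_cons_cons_swap]

theorem wedge_map_Ico_eq_of_eq_add_succ (α β : ℕ → M) {a m : ℕ} (ham : a ≤ m) (hm : β m = 0)
    (h : ∀ k, a ≤ k → k < m → α k = β k + β (k + 1)) :
    wedge R ((List.Ico a m).map α) = wedge R ((List.Ico a m).map β) := by
  induction ham using Nat.decreasingInduction with
  | self => simp
  | of_succ a ham ih =>
    have absorbed : ι R (β (a + 1)) * wedge R ((List.Ico (a + 1) m).map β) = 0 := by
      rcases (Nat.succ_le_of_lt ham).eq_or_lt with rfl | ham'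
      · rw [hm, map_zero, zero_mul]
      · rw [List.Ico.eq_cons ham', List.map_cons, ι_mul_wedge_cons_self]
    rw [List.Ico.eq_cons ham, List.map_cons, List.map_cons, wedge_cons,
      ih fun k hk => h k (by omega), h a le_rfl ham, map_add, add_mul, absorbed, add_zero,
      wedge_cons]

variable {R}

theorem contractLeft_wedge_cons (d : Module.Dual R M) (x : M) (l : List M) :
    contractLeft d (wedge R (x :: l)) =
      d x • wedge R l - ι R x * contractLeft d (wedge R l) := by
  rw [wedge_cons]
  exact contractLeft_ι_mul ..

theorem contractLeft_wedge_eq_zero (d : Module.Dual R M) (l : List M) (hl : ∀ x ∈ l, d x = 0) :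
    contractLeft d (wedge R l) = 0 := by
  induction l with
  | nil => exact contractLeft_one ..
  | cons x l ih =>
    rw [List.forall_mem_cons] at hl
    rw [contractLeft_wedge_cons, hl.1, ih hl.2, zero_smul, mul_zero, sub_zero]

theorem wedge_map_sub_eq_contractLeft (d : Module.Dual R M) (x : M) (l : List M) (hx : d x = 1)
    (hl : ∀ y ∈ l, d y = 1) :
    wedge R (l.map (· - x)) = contractLeft d (wedge R (x :: l)) := by
  have differences_killed : contractLeft d (wedge R (l.map (· - x))) = 0 := by
    refine contractLeft_wedge_eq_zero d _ (List.forall_mem_map.2 fun y hy => ?_)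
    rw [map_sub, hl y hy, hx, sub_self]
  rw [← wedge_cons_map_sub, contractLeft_wedge_cons, hx, differences_killed, one_smul, mul_zero,
    sub_zero]

theorem contractLeft_prod_pairs_mul (d : Module.Dual R M) (a b : σ → M) (l : List σ)
    (ha : ∀ i ∈ l, d (a i) = 0) (hb : ∀ i ∈ l, d (b i) = 0) (ω : ExteriorAlgebra R M) :
    contractLeft d ((l.map fun i => ι R (a i) * ι R (b i)).prod * ω) =
      (l.map fun i => ι R (a i) * ι R (b i)).prod * contractLeft d ω := by
  induction l with
  | nil => simp
  | cons i l ih =>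
    rw [List.forall_mem_cons] at ha hb
    simp only [List.map_cons, List.prod_cons, mul_assoc]
    rw [contractLeft_ι_mul, contractLeft_ι_mul, ha.1, hb.1, ih ha.2 hb.2]
    simp

/-- The iterated contraction `ι_{d₁} ⋯ ι_{d_r}` on `⋀_R M` by a list `[d₁, …, d_r]` of functionals;
the last functional of the list is contracted first. -/
def iteratedContract (l : List (Module.Dual R M)) : Module.End R (ExteriorAlgebra R M) :=
  (l.map fun d => contractLeft d).prod

theorem iteratedContract_append (l₁ l₂ : List (Module.Dual R M)) (ω : ExteriorAlgebra R M) :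
    iteratedContract (l₁ ++ l₂) ω = iteratedContract l₁ (iteratedContract l₂ ω) := by
  simp only [iteratedContract, List.map_append, List.prod_append, Module.End.mul_apply]

theorem iteratedContract_cons (d : Module.Dual R M) (l : List (Module.Dual R M))
    (ω : ExteriorAlgebra R M) :
    iteratedContract (d :: l) ω = contractLeft d (iteratedContract l ω) := rfl

theorem iteratedContract_singleton (d : Module.Dual R M) (ω : ExteriorAlgebra R M) :
    iteratedContract [d] ω = contractLeft d ω := rfl

theorem iteratedContract_contractLeft (d : Module.Dual R M) (l : List (Module.Dual R M))
    (ω : ExteriorAlgebra R M) :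
    iteratedContract l (contractLeft d ω) =
      (-1 : R) ^ l.length • contractLeft d (iteratedContract l ω) := by
  induction l with
  | nil => simp [iteratedContract]
  | cons d' l ih =>
    rw [iteratedContract_cons, ih, map_smul, contractLeft_comm, ← iteratedContract_cons,
      List.length_cons, pow_succ, mul_neg_one, neg_smul, smul_neg]

theorem iteratedContract_prod_pairs_mul (v : σ → Module.Dual R M) (a b : σ → M) (l : List σ)
    (ha_self : ∀ i ∈ l, v i (a i) = 1) (ha_lt : l.Pairwise fun k i => v i (a k) = 0)
    (hb : ∀ i ∈ l, ∀ k ∈ l, v i (b k) = 0) (ω : ExteriorAlgebra R M)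
    (hω : ∀ i ∈ l, contractLeft (v i) ω = 0) :
    iteratedContract (l.map v) ((l.map fun i => ι R (a i) * ι R (b i)).prod * ω) =
      wedge R (l.map b) * ω := by
  induction l using List.reverseRecOn generalizing ω with
  | nil => simp [iteratedContract, wedge_nil]
  | append_singleton l i ih =>
    simp only [List.pairwise_append, List.mem_append, List.mem_singleton, or_imp, forall_and,
      forall_eq] at ha_self ha_lt hb hω
    obtain ⟨ha_lt, -, ha_last⟩ := ha_lt
    have contract_last :
        contractLeft (v i) (ι R (a i) * (ι R (b i) * ω)) = ι R (b i) * ω := by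
      rw [contractLeft_ι_mul, contractLeft_ι_mul, ha_self.2, hb.2.2, hω.2]
      simp
    have killed : ∀ k ∈ l, contractLeft (v k) (ι R (b i) * ω) = 0 := by
      intro k hk
      rw [contractLeft_ι_mul, hb.2.1 k hk, hω.1 k hk]
      simp
    rw [List.map_append, iteratedContract_append]
    simp only [List.map_append, List.prod_append, List.map_cons, List.map_nil, List.prod_singleton,
      mul_assoc]
    rw [iteratedContract_singleton, contractLeft_prod_pairs_mul _ _ _ _ ha_last hb.1.2,
      contract_last, ih ha_self.1 ha_lt hb.1.1 _ killed, wedge_append, mul_assoc, wedge_cons,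
      wedge_nil, mul_one]

end ExteriorAlgebra

section Dlog

open KaehlerDifferential

theorem contrDer_apply {A : Type} [CommRing A] [Algebra ℂ A] (V : Derivation ℂ A A)
    (ω : ExteriorAlgebra A (Ω[A⁄ℂ])) :
    contrDer V ω = CliffordAlgebra.contractLeft V.liftKaehlerDifferential ω := rfl

theorem foldr_contrDer {A σ : Type} [CommRing A] [Algebra ℂ A] (V : σ → Derivation ℂ A A)
    (l : List σ) (ω : ExteriorAlgebra A (Ω[A⁄ℂ])) :
    l.foldr (fun i η => contrDer (V i) η) ω =
      iteratedContract (l.map fun i => (V i).liftKaehlerDifferential) ω := by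
  induction l with
  | nil => rfl
  | cons i l ih => rw [List.foldr_cons, ih, contrDer_apply, List.map_cons, iteratedContract_cons]

variable {n : ℕ}

theorem dlog_div {f g : FlagK n} (hf : f ≠ 0) (hg : g ≠ 0) :
    dlog n (f / g) = dlog n f - dlog n g := by
  simp only [dlog, Derivation.leibniz_div, smul_smul, smul_sub]
  congr 2 <;> field_simp

theorem liftKaehlerDifferential_dlog (V : Derivation ℂ (FlagK n) (FlagK n)) (f : FlagK n) :
    V.liftKaehlerDifferential (dlog n f) = f⁻¹ * V f := by
  rw [dlog, map_smul, Derivation.liftKaehlerDifferential_comp_D, smul_eq_mul]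

theorem wedge_map_dlog (l : List (FlagK n)) :
    wedge (FlagK n) (l.map (dlog n)) =
      l.prod⁻¹ • wedge (FlagK n) (l.map (D ℂ (FlagK n))) := by
  have h := wedge_map_smul (FlagK n) (·⁻¹) (D ℂ (FlagK n)) l
  rwa [← List.prod_inv] at h

theorem wedge_map_dlog_div (E : Derivation ℂ (FlagK n) (FlagK n)) {g : FlagK n}
    {l : List (FlagK n)} (hg : g ≠ 0) (hEg : E g = g) (hl : ∀ f ∈ l, f ≠ 0)
    (hEl : ∀ f ∈ l, E f = f) :
    wedge (FlagK n) (l.map fun f => dlog n (f / g)) =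
      contrDer E (wedge (FlagK n) ((g :: l).map (dlog n))) := by
  have quotient_eq_sub : (l.map fun f => dlog n (f / g)) = (l.map (dlog n)).map (· - dlog n g) := by
    rw [List.map_map]
    exact List.map_congr_left fun f hf => dlog_div (hl f hf) hg
  rw [quotient_eq_sub, contrDer_apply, List.map_cons]
  refine wedge_map_sub_eq_contractLeft _ _ _ ?_ (List.forall_mem_map.2 fun f hf => ?_)
  · rw [liftKaehlerDifferential_dlog, hEg, inv_mul_cancel₀ hg]
  · rw [liftKaehlerDifferential_dlog, hEl f hf, inv_mul_cancel₀ (hl f hf)]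

end Dlog

section FlagCoordinates

variable {n k : ℕ}

theorem flagA_of_ne_one (hk : k ≠ 1) : flagA n k = flagZ n k * flagZh n k := if_neg hk

theorem flagZh_self : flagZh n n = 1 := dif_neg (by omega)

theorem flagB_succ_self : flagB n (n + 1) = 0 := by simp [flagB]

theorem flagA_eq_flagB_add_flagB_succ (hk : k ≤ n) :
    flagA n k = flagB n k + flagB n (k + 1) := by
  have tail : ∑ i ∈ Finset.Ioc k n, (-1 : FlagR n) ^ (i - k) * flagA n i = -flagB n (k + 1) := by
    rw [flagB, Finset.Icc_add_one_left_eq_Ioc, ← Finset.sum_neg_distrib]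
    refine Finset.sum_congr rfl fun i hi => ?_
    have : i - k = i - (k + 1) + 1 := by grind
    rw [this, pow_succ]
    ring
  rw [flagB, ← Finset.add_sum_Ioc_eq_sum_Icc hk, tail]
  simp

theorem flagA_one_eq_flagB_two (hn : 2 ≤ n) : flagA n 1 = flagB n 2 := by
  rw [flagB, ← Finset.add_sum_Ioc_eq_sum_Icc hn, ← Finset.Icc_add_one_left_eq_Ioc, Nat.sub_self,
    pow_zero, one_mul, flagA_of_ne_one (k := 2) (by omega), flagA, if_pos rfl]
  congr 1
  refine Finset.sum_congr rfl fun i hi => ?_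
  obtain ⟨p, rfl⟩ := Nat.exists_eq_add_of_le' (Finset.mem_Icc.1 hi).1
  rw [flagA_of_ne_one (by omega), show p + (2 + 1) - 2 = p + 1 by omega]
  ring

theorem flagZ_ne_zero : flagZ n k ≠ 0 := by
  unfold flagZ
  split_ifs <;> simp

theorem flagZh_ne_zero : flagZh n k ≠ 0 := by
  unfold flagZh
  split_ifs <;> simp

theorem flagA_ne_zero (hk : k ≠ 1) : flagA n k ≠ 0 := by
  rw [flagA_of_ne_one hk]
  exact mul_ne_zero flagZ_ne_zero flagZh_ne_zero

theorem eval_flagA (m : ℕ) (hk : 2 ≤ k) (hkn : k ≤ n) :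
    eval (Sum.elim (fun s => if s.1 = m then (1 : ℂ) else 0) fun _ => 1) (flagA n k) =
      if k = m then 1 else 0 := by
  rw [flagA_of_ne_one (by omega), flagZ, dif_pos ⟨hk, hkn⟩, map_mul, eval_X, flagZh]
  split_ifs <;> simp_all

theorem flagB_ne_zero (hk : 2 ≤ k) (hkn : k ≤ n) : flagB n k ≠ 0 := by
  have eval_eq_one :
      eval (Sum.elim (fun s => if s.1 = k then (1 : ℂ) else 0) fun _ => 1) (flagB n k) = 1 := by
    rw [flagB, map_sum, Finset.sum_eq_single_of_mem k (by simp [hkn])]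
    · simp [eval_flagA, hk, hkn]
    · intro i hi hik
      rw [Finset.mem_Icc] at hi
      rw [map_mul, eval_flagA k (hk.trans hi.1) hi.2, if_neg hik, mul_zero]
  intro h
  simp [h] at eval_eq_one

variable {i : ℕ}

theorem flagV_flagZ (hi : i < n - 1) (hk : 2 ≤ k) (hkn : k ≤ n) :
    flagV n i (flagZ n k) = if k = i + 1 then flagZ n k else 0 := by
  conv_lhs => rw [flagV, if_neg (by omega), flagZ, dif_pos ⟨hk, hkn⟩, mkDerivation_X]

theorem flagV_flagZh (hi : i < n - 1) (hk : 2 ≤ k) :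
    flagV n i (flagZh n k) = if k = i + 1 then -flagZh n k else 0 := by
  by_cases h : 2 ≤ k ∧ k ≤ n - 1
  · conv_lhs => rw [flagV, if_neg (by omega), flagZh, dif_pos h, mkDerivation_X]
  · rw [if_neg (by omega), flagZh, dif_neg h, Derivation.map_one_eq_zero]

theorem flagV_flagA (hi : i < n - 1) (hk : 2 ≤ k) (hkn : k ≤ n) :
    flagV n i (flagA n k) = 0 := by
  rw [flagA_of_ne_one (by omega), Derivation.leibniz, flagV_flagZ hi hk hkn,
    flagV_flagZh hi hk]
  split_ifs
  · simp only [smul_eq_mul]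
    ring
  · simp

theorem flagV_last_flagA (hk : 2 ≤ k) (hkn : k ≤ n) :
    flagV n (n - 1) (flagA n k) = flagA n k := by
  have hZ : flagV n (n - 1) (flagZ n k) = if k = n then flagZ n k else 0 := by
    conv_lhs => rw [flagV, if_pos rfl, flagZ, dif_pos ⟨hk, hkn⟩, mkDerivation_X]
  rw [flagA_of_ne_one (by omega), Derivation.leibniz, hZ]
  rcases hkn.eq_or_lt with rfl | hkn
  · simp [flagZh_self]
  · have hZh : flagV n (n - 1) (flagZh n k) = flagZh n k := by
      conv_lhs => rw [flagV, if_pos rfl, flagZh, dif_pos (by omega), mkDerivation_X]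
    simp [hZh, hkn.ne]

theorem flagV_last_flagB (hk : 2 ≤ k) : flagV n (n - 1) (flagB n k) = flagB n k := by
  rw [flagB, map_sum]
  refine Finset.sum_congr rfl fun i hi => ?_
  rw [Finset.mem_Icc] at hi
  have hA := flagV_last_flagA (hk.trans hi.1) hi.2
  rcases neg_one_pow_eq_or (FlagR n) (i - k) with h | h <;> simp [h, hA]

/-- The image of `z_k` in `K`. -/
def flagZK (n k : ℕ) : FlagK n := algebraMap (FlagR n) (FlagK n) (flagZ n k)

theorem flagZK_ne_zero : flagZK n k ≠ 0 :=
  (map_ne_zero_iff _ (IsFractionRing.injective _ _)).2 flagZ_ne_zero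

theorem flagAK_ne_zero (hk : k ≠ 1) : flagAK n k ≠ 0 :=
  (map_ne_zero_iff _ (IsFractionRing.injective _ _)).2 (flagA_ne_zero hk)

theorem flagBK_ne_zero (hk : 2 ≤ k) (hkn : k ≤ n) : flagBK n k ≠ 0 :=
  (map_ne_zero_iff _ (IsFractionRing.injective _ _)).2 (flagB_ne_zero hk hkn)

theorem flagAK_one_eq_flagBK_two (hn : 2 ≤ n) : flagAK n 1 = flagBK n 2 :=
  congrArg _ (flagA_one_eq_flagB_two hn)

theorem flagBK_succ_self : flagBK n (n + 1) = 0 := by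
  rw [flagBK, flagB_succ_self, map_zero]

theorem flagAK_eq_flagBK_add_flagBK_succ (hk : k ≤ n) :
    flagAK n k = flagBK n k + flagBK n (k + 1) := by
  rw [flagAK, flagA_eq_flagB_add_flagB_succ hk, map_add, flagBK, flagBK]

end FlagCoordinates

section ExtendedDerivations

open KaehlerDifferential

variable {n i k : ℕ} {W : Derivation ℂ (FlagK n) (FlagK n)}

theorem liftKaehlerDifferential_dlog_flagZK
    (hW : ∀ g, W (algebraMap (FlagR n) (FlagK n) g) = algebraMap _ _ (flagV n i g))
    (hi : i < n - 1) (hk : 2 ≤ k) (hkn : k ≤ n) :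
    W.liftKaehlerDifferential (dlog n (flagZK n k)) = if k = i + 1 then 1 else 0 := by
  rw [liftKaehlerDifferential_dlog]
  conv_lhs => rw [flagZK, hW, flagV_flagZ hi hk hkn, apply_ite (algebraMap _ _), map_zero, mul_ite,
    mul_zero, ← flagZK, inv_mul_cancel₀ flagZK_ne_zero]

theorem liftKaehlerDifferential_D_flagAK
    (hW : ∀ g, W (algebraMap (FlagR n) (FlagK n) g) = algebraMap _ _ (flagV n i g))
    (hi : i < n - 1) (hk : 2 ≤ k) (hkn : k ≤ n) :
    W.liftKaehlerDifferential (D ℂ (FlagK n) (flagAK n k)) = 0 := by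
  rw [Derivation.liftKaehlerDifferential_comp_D, flagAK, hW, flagV_flagA hi hk hkn, map_zero]

theorem extension_flagV_last_flagAK
    (hW : ∀ g, W (algebraMap (FlagR n) (FlagK n) g) = algebraMap _ _ (flagV n (n - 1) g))
    (hk : 2 ≤ k) (hkn : k ≤ n) : W (flagAK n k) = flagAK n k := by
  rw [flagAK, hW, flagV_last_flagA hk hkn]

theorem extension_flagV_last_flagBK
    (hW : ∀ g, W (algebraMap (FlagR n) (FlagK n) g) = algebraMap _ _ (flagV n (n - 1) g))
    (hk : 2 ≤ k) : W (flagBK n k) = flagBK n k := by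
  rw [flagBK, hW, flagV_last_flagB hk]

end ExtendedDerivations

section FlagForms

open KaehlerDifferential ExteriorAlgebra

variable {n : ℕ}

theorem ι_D_flagZ_mul_ι_D_flagZh {k : ℕ} (hk : k ≠ 1) :
    ι (FlagK n) (D ℂ (FlagK n) (algebraMap (FlagR n) (FlagK n) (flagZ n k))) *
        ι (FlagK n) (D ℂ (FlagK n) (algebraMap (FlagR n) (FlagK n) (flagZh n k))) =
      ι (FlagK n) (dlog n (flagZK n k)) * ι (FlagK n) (D ℂ (FlagK n) (flagAK n k)) := by
  rw [flagAK, flagA_of_ne_one hk, map_mul, ← flagZK, Derivation.leibniz, dlog]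
  simp only [map_add, map_smul, mul_add, smul_mul_smul_comm, ι_sq_zero,
    inv_mul_cancel₀ flagZK_ne_zero, one_smul, smul_zero, add_zero]

theorem flagOmegaK_eq_prod_dlog_flagZK_mul_D_flagAK (hn : n ≠ 1) :
    flagOmegaK n =
      ((List.Ico 2 n).map fun k =>
        ι (FlagK n) (dlog n (flagZK n k)) * ι (FlagK n) (D ℂ (FlagK n) (flagAK n k))).prod *
        ι (FlagK n) (D ℂ (FlagK n) (flagAK n n)) := by
  have last_factor : flagAK n n = algebraMap (FlagR n) (FlagK n) (flagZ n n) := by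
    rw [flagAK, flagA_of_ne_one hn, flagZh_self, mul_one]
  rw [flagOmegaK, last_factor]
  congr 2
  refine List.map_congr_left fun k hk => ι_D_flagZ_mul_ι_D_flagZh ?_
  rw [List.Ico.mem] at hk
  omega

theorem foldr_contrDer_flagOmegaK (hn : 2 ≤ n) {W : ℕ → Derivation ℂ (FlagK n) (FlagK n)}
    (hW : ∀ i, ∀ g : FlagR n,
      W i (algebraMap (FlagR n) (FlagK n) g) = algebraMap (FlagR n) (FlagK n) (flagV n i g)) :
    (List.Ico 1 (n - 1)).foldr (fun i ω => contrDer (W i) ω) (flagOmegaK n) =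
      wedge (FlagK n) ((List.Ico 2 (n + 1)).map fun k => D ℂ (FlagK n) (flagAK n k)) := by
  have reindex : List.Ico 1 (n - 1) = (List.Ico 2 n).map (· - 1) :=
    (List.Ico.map_sub 2 n 1 one_le_two).symm
  rw [reindex, foldr_contrDer, List.map_map, flagOmegaK_eq_prod_dlog_flagZK_mul_D_flagAK (by omega),
    iteratedContract_prod_pairs_mul _ _ (fun k => D ℂ (FlagK n) (flagAK n k)),
    List.Ico.succ_top hn, List.map_append, wedge_append, List.map_singleton, wedge_cons, wedge_nil,
    mul_one]
  · intro k hk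
    rw [List.Ico.mem] at hk
    rw [Function.comp_apply, liftKaehlerDifferential_dlog_flagZK (hW _) (by omega) hk.1 hk.2.le,
      if_pos (by omega)]
  · refine (List.Ico.pairwise_lt 2 n).imp_of_mem fun {k i} hk hi hki => ?_
    rw [List.Ico.mem] at hk hi
    rw [Function.comp_apply, liftKaehlerDifferential_dlog_flagZK (hW _) (by omega) hk.1 hk.2.le,
      if_neg (by omega)]
  · intro i hi k hk
    rw [List.Ico.mem] at hi hk
    have hi' : i - 1 < n - 1 := by omega
    exact liftKaehlerDifferential_D_flagAK (hW _) hi' hk.1 hk.2.le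
  · intro i hi
    rw [List.Ico.mem] at hi
    have hi' : i - 1 < n - 1 := by omega
    rw [CliffordAlgebra.contractLeft_ι, Function.comp_apply,
      liftKaehlerDifferential_D_flagAK (hW _) hi' hn le_rfl, map_zero]

theorem foldr_contrDer_smul_flagOmegaK (hn : 2 ≤ n) {W : ℕ → Derivation ℂ (FlagK n) (FlagK n)}
    (hW : ∀ i, ∀ g : FlagR n,
      W i (algebraMap (FlagR n) (FlagK n) g) = algebraMap (FlagR n) (FlagK n) (flagV n i g))
    (c : FlagK n) :
    (List.Ico 1 n).foldr (fun i ω => contrDer (W i) ω) (c • flagOmegaK n) =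
      (-1 : FlagK n) ^ n • c • contrDer (W (n - 1))
        (wedge (FlagK n) ((List.Ico 2 (n + 1)).map fun k => D ℂ (FlagK n) (flagAK n k))) := by
  have split_last : List.Ico 1 n = List.Ico 1 (n - 1) ++ [n - 1] := by
    rw [← List.Ico.succ_top (by omega), Nat.sub_add_cancel (by omega)]
  have sign : (-1 : FlagK n) ^ (n - 1 - 1) = (-1) ^ n := by
    rw [← Nat.sub_add_cancel hn, pow_add]
    simp
  rw [foldr_contrDer, map_smul, split_last, List.map_append, iteratedContract_append,
    List.map_singleton, iteratedContract_singleton, iteratedContract_contractLeft, ← foldr_contrDer,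
    foldr_contrDer_flagOmegaK hn hW, List.length_map, List.Ico.length, sign, smul_comm,
    contrDer_apply]

/-- The factors `A₁, A₃, …, A_{j-1}, B_j, …, B_n` of the denominator, in this order. -/
def flagFactors (n j : ℕ) : List (FlagK n) :=
  flagAK n 1 :: (List.Ico 3 j).map (flagAK n) ++ (List.Ico j (n + 1)).map (flagBK n)

/-- The factors of the denominator other than `B_j`: these are the numerators of the logarithmic
forms `dlog (f / B_j)`. -/
def flagCofactors (n j : ℕ) : List (FlagK n) :=
  flagAK n 1 :: (List.Ico 3 j).map (flagAK n) ++ (List.Ico (j + 1) (n + 1)).map (flagBK n)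

theorem prod_flagFactors (n j : ℕ) :
    (flagFactors n j).prod =
      flagAK n 1 * (∏ k ∈ Finset.Ico 3 j, flagAK n k) * ∏ k ∈ Finset.Icc j n, flagBK n k := by
  rw [flagFactors, List.prod_append, List.prod_cons, ← Finset.Ico_add_one_right_eq_Icc]
  rfl

theorem wedge_map_D_flagFactors {j : ℕ} (hj : 3 ≤ j) (hjn : j ≤ n) :
    wedge (FlagK n) ((flagFactors n j).map (D ℂ (FlagK n))) =
      wedge (FlagK n) ((List.Ico 2 (n + 1)).map fun k => D ℂ (FlagK n) (flagAK n k)) := by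
  have dA_eq_dB : ∀ a ≤ n + 1,
      wedge (FlagK n) ((List.Ico a (n + 1)).map fun k => D ℂ (FlagK n) (flagAK n k)) =
        wedge (FlagK n) ((List.Ico a (n + 1)).map fun k => D ℂ (FlagK n) (flagBK n k)) := by
    intro a ha
    refine wedge_map_Ico_eq_of_eq_add_succ _ _ _ ha ?_ fun k _ hk => ?_
    · rw [flagBK_succ_self, map_zero]
    · rw [flagAK_eq_flagBK_add_flagBK_succ (by omega), map_add]
  simp only [flagFactors, List.cons_append, List.map_cons, List.map_append, List.map_map,
    Function.comp_def]
  rw [wedge_cons, wedge_append, ← dA_eq_dB j (by omega), ← wedge_append, ← List.map_append,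
    List.Ico.append_consecutive hj (by omega), dA_eq_dB 3 (by omega), ← wedge_cons,
    flagAK_one_eq_flagBK_two (by omega), dA_eq_dB 2 (by omega),
    List.Ico.eq_cons (show 2 < n + 1 by omega), List.map_cons]

theorem wedge_map_flagCofactors {M : Type*} [AddCommGroup M] [Module (FlagK n) M] (f : FlagK n → M)
    (j : ℕ) :
    wedge (FlagK n) ((flagCofactors n j).map f) =
      ι (FlagK n) (f (flagAK n 1)) *
          ((List.Ico 3 j).map fun k => ι (FlagK n) (f (flagAK n k))).prod *
        ((List.Ico (j + 1) (n + 1)).map fun k => ι (FlagK n) (f (flagBK n k))).prod := by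
  simp only [flagCofactors, List.map_append, List.map_cons, List.map_map, wedge_append, wedge_cons,
    wedge_map, Function.comp_apply]

theorem wedge_map_flagBK_cons_flagCofactors {M : Type*} [AddCommGroup M] [Module (FlagK n) M]
    (f : FlagK n → M) {j : ℕ} (hj : 3 ≤ j) (hjn : j ≤ n) :
    wedge (FlagK n) ((flagBK n j :: flagCofactors n j).map f) =
      (-1 : FlagK n) ^ j • wedge (FlagK n) ((flagFactors n j).map f) := by
  have sign : (-1 : FlagK n) ^ (j - 3 + 1) = (-1) ^ j := by
    rw [← Nat.sub_add_cancel hj, pow_add, pow_add]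
    norm_num
  rw [flagFactors, flagCofactors, List.Ico.eq_cons (show j < n + 1 by omega), List.map_cons,
    List.map_append, wedge_cons_append, List.length_map, List.length_cons, List.length_map,
    List.Ico.length, sign, List.map_append, List.map_cons, List.map_cons, List.map_cons]

theorem forall_mem_flagCofactors {P : FlagK n → Prop} {j : ℕ} (hj : 3 ≤ j) (hjn : j ≤ n)
    (hA : ∀ k, 2 ≤ k → k ≤ n → P (flagAK n k)) (hB : ∀ k, 2 ≤ k → k ≤ n → P (flagBK n k)) :
    ∀ f ∈ flagCofactors n j, P f := by
  rw [flagCofactors, List.forall_mem_append, List.forall_mem_cons, List.forall_mem_map,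
    List.forall_mem_map, flagAK_one_eq_flagBK_two (by omega)]
  simp only [List.Ico.mem]
  exact ⟨⟨hB 2 le_rfl (by omega), fun k hk => hA k (by omega) (by omega)⟩,
    fun k hk => hB k (by omega) (by omega)⟩

theorem wedge_dlog_div_flagBK {j : ℕ} (hj : 3 ≤ j) (hjn : j ≤ n)
    {E : Derivation ℂ (FlagK n) (FlagK n)}
    (hE : ∀ g, E (algebraMap (FlagR n) (FlagK n) g) = algebraMap _ _ (flagV n (n - 1) g)) :
    wedge (FlagK n) ((flagCofactors n j).map fun f => dlog n (f / flagBK n j)) =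
      (-1 : FlagK n) ^ j • (flagFactors n j).prod⁻¹ • contrDer E
        (wedge (FlagK n) ((List.Ico 2 (n + 1)).map fun k => D ℂ (FlagK n) (flagAK n k))) := by
  have ne_zero : ∀ f ∈ flagCofactors n j, f ≠ 0 :=
    forall_mem_flagCofactors hj hjn (fun k hk _ => flagAK_ne_zero (by omega))
      fun k hk hkn => flagBK_ne_zero hk hkn
  have weight_one : ∀ f ∈ flagCofactors n j, E f = f :=
    forall_mem_flagCofactors hj hjn (fun k hk hkn => extension_flagV_last_flagAK hE hk hkn)
      fun k hk _ => extension_flagV_last_flagBK hE hk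
  rw [wedge_map_dlog_div E (flagBK_ne_zero (by omega) hjn)
      (extension_flagV_last_flagBK hE (by omega)) ne_zero weight_one,
    wedge_map_flagBK_cons_flagCofactors _ hj hjn, wedge_map_dlog, wedge_map_D_flagFactors hj hjn,
    map_smul, map_smul]

end FlagForms

/-- Proposition 3.5: for every `3 ≤ j ≤ n`,
`ι_{V₁}⋯ι_{V_{n−1}} ((A₁A₃⋯A_{j−1}·B_jB_{j+1}⋯B_n)⁻¹ Ω)
 = (−1)^{n−j} dlog(A₁/B_j) ∧ dlog(A₃/B_j) ∧ ⋯ ∧ dlog(A_{j−1}/B_j)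
     ∧ dlog(B_{j+1}/B_j) ∧ ⋯ ∧ dlog(B_n/B_j)`,
where the `ι_{V_i}` are the (unique) extensions of the derivations `V_i` to `K`. -/
theorem flag_general_contraction (n : ℕ) (hn : 3 ≤ n) (j : ℕ) (hj : 3 ≤ j ∧ j ≤ n)
    (W : ℕ → Derivation ℂ (FlagK n) (FlagK n))
    (hW : ∀ i, ∀ g : FlagR n,
      W i (algebraMap (FlagR n) (FlagK n) g) = algebraMap (FlagR n) (FlagK n) (flagV n i g)) :
    (List.Ico 1 n).foldr (fun i ω => contrDer (W i) ω)
        (((flagAK n 1 * (∏ k ∈ Finset.Ico 3 j, flagAK n k) *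
            ∏ k ∈ Finset.Icc j n, flagBK n k)⁻¹) • flagOmegaK n) =
      ((-1 : FlagK n) ^ (n - j)) •
        (ExteriorAlgebra.ι (FlagK n) (dlog n (flagAK n 1 / flagBK n j)) *
          (((List.Ico 3 j).map (fun k =>
            ExteriorAlgebra.ι (FlagK n) (dlog n (flagAK n k / flagBK n j)))).prod) *
          (((List.Ico (j + 1) (n + 1)).map (fun k =>
            ExteriorAlgebra.ι (FlagK n) (dlog n (flagBK n k / flagBK n j)))).prod)) := by
  obtain ⟨hj3, hjn⟩ := hj
  rw [← wedge_map_flagCofactors (fun f => dlog n (f / flagBK n j)),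
    wedge_dlog_div_flagBK hj3 hjn (hW (n - 1)), foldr_contrDer_smul_flagOmegaK (by omega) hW,
    prod_flagFactors, smul_smul ((-1 : FlagK n) ^ (n - j)), ← pow_add, Nat.sub_add_cancel hjn]

end
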